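/- arXiv:math/0602677 — 10 statements merged into one kernel-verified Lean document; each statement's English description precedes it below -/
import Mathlib

section
/- Let H and H̃ be complex Hilbert spaces, let U, V be unitary operators on H and Ũ, Ṽ unitary operators on H̃, and let H_1,…,H_5 ⊆ H⊕H and H̃_1,…,H̃_5 ⊆ H̃⊕H̃ be the associated quintuples of subspaces (H_1 = H⊕0, H_2 = 0⊕H, H_3 = {(x,x)}, H_4 = {(Ux,x)}, H_5 = {(Vx,x)}, and analogously for the tilde data). Then a bounded linear operator 𝓡 : H⊕H → H̃⊕H̃ satisfies 𝓡(H_i) ⊆ H̃_i for all i = 1,…,5 if and only if 𝓡 = R⊕R for some bounded operator R : H → H̃ with RU = ŨR and RV = ṼR. -/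
/-- A bounded operator `𝓡 : H⊕H → H̃⊕H̃` maps each of the five subspaces
`H⊕0`, `0⊕H`, `{(x,x)}`, `{(Ux,x)}`, `{(Vx,x)}` into the corresponding tilde subspace
iff `𝓡 = R⊕R` for some bounded `R` intertwining the unitary pairs. -/
theorem stmt_0
    {H H' : Type*}
    [NormedAddCommGroup H] [InnerProductSpace ℂ H] [CompleteSpace H]
    [NormedAddCommGroup H'] [InnerProductSpace ℂ H'] [CompleteSpace H']
    (U V : H →L[ℂ] H) (U' V' : H' →L[ℂ] H')
    (hU : U ∈ unitary (H →L[ℂ] H)) (hV : V ∈ unitary (H →L[ℂ] H))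
    (hU' : U' ∈ unitary (H' →L[ℂ] H')) (hV' : V' ∈ unitary (H' →L[ℂ] H'))
    (𝓡 : (H × H) →L[ℂ] (H' × H')) :
    ((∀ x : H, ∃ y : H', 𝓡 (x, 0) = (y, 0)) ∧
     (∀ x : H, ∃ y : H', 𝓡 (0, x) = (0, y)) ∧
     (∀ x : H, ∃ y : H', 𝓡 (x, x) = (y, y)) ∧
     (∀ x : H, ∃ y : H', 𝓡 (U x, x) = (U' y, y)) ∧
     (∀ x : H, ∃ y : H', 𝓡 (V x, x) = (V' y, y))) ↔
    (∃ R : H →L[ℂ] H', (∀ p : H × H, 𝓡 p = (R p.1, R p.2)) ∧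
      R ∘L U = U' ∘L R ∧ R ∘L V = V' ∘L R) := by
  constructor
  · rintro ⟨h₁, h₂, h₃, h₄, h₅⟩
    let R : H →L[ℂ] H' :=
      ContinuousLinearMap.fst ℂ H' H' ∘L 𝓡 ∘L ContinuousLinearMap.inl ℂ H H
    have hinl (x : H) : 𝓡 (x, 0) = (R x, 0) := by
      obtain ⟨y, hy⟩ := h₁ x
      simp [R, hy]
    have hinr (x : H) : 𝓡 (0, x) = (0, R x) := by
      obtain ⟨y, hy⟩ := h₂ x
      obtain ⟨z, hz⟩ := h₃ x
      have hadd : 𝓡 (x, x) = 𝓡 (x, 0) + 𝓡 (0, x) := by simp [← map_add]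
      rw [hz, hinl, hy, Prod.mk_add_mk, add_zero, zero_add, Prod.mk.injEq] at hadd
      rw [hy, ← hadd.2, hadd.1]
    have hdiag (p : H × H) : 𝓡 p = (R p.1, R p.2) := by
      have hadd : 𝓡 p = 𝓡 (p.1, 0) + 𝓡 (0, p.2) := by simp [← map_add]
      rw [hadd, hinl, hinr, Prod.mk_add_mk, add_zero, zero_add]
    refine ⟨R, hdiag, ?_, ?_⟩ <;> ext x
    · obtain ⟨y, hy⟩ := h₄ x
      rw [hdiag, Prod.mk.injEq] at hy
      exact hy.1.trans (congrArg U' hy.2.symm)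
    · obtain ⟨y, hy⟩ := h₅ x
      rw [hdiag, Prod.mk.injEq] at hy
      exact hy.1.trans (congrArg V' hy.2.symm)
  · rintro ⟨R, hdiag, hRU, hRV⟩
    refine ⟨fun x => ⟨R x, ?_⟩, fun x => ⟨R x, ?_⟩, fun x => ⟨R x, hdiag _⟩,
      fun x => ⟨R x, ?_⟩, fun x => ⟨R x, ?_⟩⟩
    · simp [hdiag]
    · simp [hdiag]
    · exact (hdiag _).trans (congrArg (·, R x) (DFunLike.congr_fun hRU x))
    · exact (hdiag _).trans (congrArg (·, R x) (DFunLike.congr_fun hRV x))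
end

section
/- Let H be a complex Hilbert space and U, V unitary operators on H, and let S_{U,V} be the associated system of five subspaces of H⊕H. Then S_{U,V} is transitive if and only if the pair (U,V) is irreducible, i.e., every bounded operator R on H with RU = UR and RV = VR is a scalar multiple of the identity. -/
/-- An operator on `E × E` preserving both coordinate subspaces and the diagonal is `R ⊕ R`,
where `R` is its upper left corner. -/
lemma apply_eq_of_preserves_axes_and_diagonal
    {𝕜 E : Type*} [NontriviallyNormedField 𝕜] [NormedAddCommGroup E] [NormedSpace 𝕜 E]
    (T : (E × E) →L[𝕜] (E × E))
    (h₁ : ∀ x : E, ∃ y : E, T (x, 0) = (y, 0))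
    (h₂ : ∀ x : E, ∃ y : E, T (0, x) = (0, y))
    (h₃ : ∀ x : E, ∃ y : E, T (x, x) = (y, y)) (a b : E) :
    T (a, b) = ((T (a, 0)).1, (T (b, 0)).1) := by
  have split (a b : E) : T (a, b) = T (a, 0) + T (0, b) := by
    rw [← map_add]; simp
  obtain ⟨y, hy⟩ := h₁ a
  obtain ⟨z, hz⟩ := h₂ b
  obtain ⟨w, hw⟩ := h₁ b
  obtain ⟨d, hd⟩ := h₃ b
  rw [split, hw, hz] at hd
  rw [split, hy, hz, hw]
  simp only [Prod.mk_add_mk, add_zero, zero_add, Prod.mk.injEq] at hd ⊢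
  exact ⟨trivial, hd.2.trans hd.1.symm⟩

/-- If `R ⊕ R` preserves the graph `{(W x, x)}`, then `R` commutes with `W`. -/
lemma comp_comm_of_preserves_graph
    {𝕜 E : Type*} [NontriviallyNormedField 𝕜] [NormedAddCommGroup E] [NormedSpace 𝕜 E]
    (R W : E →L[𝕜] E) (h : ∀ x : E, ∃ y : E, (R (W x), R x) = (W y, y)) :
    R ∘L W = W ∘L R := by
  ext x
  obtain ⟨y, hy⟩ := h x
  obtain ⟨h₁, rfl⟩ := Prod.mk.inj hy
  exact h₁

/-- The system `S_{U,V}` of five subspaces of `H⊕H` is transitive iff the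
pair of unitaries `(U,V)` is irreducible. -/
theorem stmt_1
    {H : Type*}
    [NormedAddCommGroup H] [InnerProductSpace ℂ H] [CompleteSpace H]
    (U V : H →L[ℂ] H)
    (hU : U ∈ unitary (H →L[ℂ] H)) (hV : V ∈ unitary (H →L[ℂ] H)) :
    (∀ 𝓡 : (H × H) →L[ℂ] (H × H),
      (∀ x : H, ∃ y : H, 𝓡 (x, 0) = (y, 0)) →
      (∀ x : H, ∃ y : H, 𝓡 (0, x) = (0, y)) →
      (∀ x : H, ∃ y : H, 𝓡 (x, x) = (y, y)) →
      (∀ x : H, ∃ y : H, 𝓡 (U x, x) = (U y, y)) →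
      (∀ x : H, ∃ y : H, 𝓡 (V x, x) = (V y, y)) →
      ∃ c : ℂ, 𝓡 = c • (1 : (H × H) →L[ℂ] (H × H))) ↔
    (∀ R : H →L[ℂ] H, R ∘L U = U ∘L R → R ∘L V = V ∘L R →
      ∃ c : ℂ, R = c • (1 : H →L[ℂ] H)) := by
  constructor
  · intro h R hRU hRV
    have hRU' (x : H) : R (U x) = U (R x) := DFunLike.congr_fun hRU x
    have hRV' (x : H) : R (V x) = V (R x) := DFunLike.congr_fun hRV x
    obtain ⟨c, hc⟩ := h (R.prodMap R) (fun x => ⟨R x, by simp⟩) (fun x => ⟨R x, by simp⟩)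
      (fun x => ⟨R x, by simp⟩) (fun x => ⟨R x, by simp [hRU']⟩) (fun x => ⟨R x, by simp [hRV']⟩)
    refine ⟨c, ?_⟩
    ext x
    simpa using congrArg Prod.fst (DFunLike.congr_fun hc (x, 0))
  · intro h 𝓡 h₁ h₂ h₃ h₄ h₅
    let R : H →L[ℂ] H := ContinuousLinearMap.fst ℂ H H ∘L 𝓡 ∘L ContinuousLinearMap.inl ℂ H H
    have key (a b : H) : 𝓡 (a, b) = (R a, R b) :=
      apply_eq_of_preserves_axes_and_diagonal 𝓡 h₁ h₂ h₃ a b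
    obtain ⟨c, hc⟩ := h R
      (comp_comm_of_preserves_graph R U fun x => by simpa only [key] using h₄ x)
      (comp_comm_of_preserves_graph R V fun x => by simpa only [key] using h₅ x)
    refine ⟨c, ContinuousLinearMap.ext fun ⟨a, b⟩ => ?_⟩
    rw [key, hc]
    simp
end

section
/- Let H and H̃ be complex Hilbert spaces, U, V unitary operators on H, and Ũ, Ṽ unitary operators on H̃, with associated systems of five subspaces S_{U,V} of H⊕H and S_{Ũ,Ṽ} of H̃⊕H̃. Then S_{U,V} is isomorphic to S_{Ũ,Ṽ} (there is a bounded invertible operator 𝓡 : H⊕H → H̃⊕H̃ with 𝓡(H_i) = H̃_i for i = 1,…,5) if and only if the pair (U,V) is unitarily equivalent to the pair (Ũ,Ṽ), i.e., there exists a unitary W : H → H̃ with WU = ŨW and WV = ṼW. -/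
open ContinuousLinearMap in
/-- The unitary part of the polar decomposition of a bounded invertible operator `A` intertwines
every pair of unitary operators that `A` intertwines. -/
theorem ContinuousLinearEquiv.exists_linearIsometryEquiv_intertwining
    {H H' : Type*}
    [NormedAddCommGroup H] [InnerProductSpace ℂ H] [CompleteSpace H]
    [NormedAddCommGroup H'] [InnerProductSpace ℂ H'] [CompleteSpace H']
    (A : H ≃L[ℂ] H') :
    ∃ W : H ≃ₗᵢ[ℂ] H', ∀ T ∈ unitary (H →L[ℂ] H), ∀ T' ∈ unitary (H' →L[ℂ] H'),
      (∀ x, A (T x) = T' (A x)) → ∀ x, W (T x) = T' (W x) := by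
  set B : H →L[ℂ] H' := (A : H →L[ℂ] H') with hB
  set P : H →L[ℂ] H := adjoint B ∘L B
  have hP0 : 0 ≤ P := (nonneg_iff_isPositive P).2 (isPositive_adjoint_comp_self B)
  have hPu : IsUnit P := by
    set C : H' →L[ℂ] H := (A.symm : H' →L[ℂ] H) with hC
    have hBC : B ∘L C = ContinuousLinearMap.id ℂ H' := by ext; simp [hB, hC]
    have hCB : C ∘L B = ContinuousLinearMap.id ℂ H := by ext; simp [hB, hC]
    have hadj : adjoint B ∘L adjoint C = 1 := by
      rw [← adjoint_comp, hCB]; exact star_one (H →L[ℂ] H)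
    have hadj' : adjoint C ∘L adjoint B = ContinuousLinearMap.id ℂ H' := by
      rw [← adjoint_comp, hBC]; exact star_one (H' →L[ℂ] H')
    refine ⟨⟨P, C ∘L adjoint C, ?_, ?_⟩, rfl⟩
    · change adjoint B ∘L (B ∘L C) ∘L adjoint C = 1
      rw [hBC, id_comp, hadj]
    · change C ∘L (adjoint C ∘L adjoint B) ∘L B = 1
      rw [hadj', id_comp, hCB]
      rfl
  have hSS : CFC.sqrt P * CFC.sqrt P = P := CFC.sqrt_mul_sqrt_self P hP0
  obtain ⟨S, hS⟩ : IsUnit (CFC.sqrt P) := (CFC.isUnit_sqrt_iff P hP0).2 hPu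
  have hSsa : adjoint (S : H →L[ℂ] H) = S := by
    rw [hS]; exact (IsSelfAdjoint.of_nonneg (CFC.sqrt_nonneg P)).star_eq
  have hnorm (x : H) : ‖A x‖ = ‖(S : H →L[ℂ] H) x‖ := by
    have h : inner ℂ (B x) (B x) = inner ℂ ((S : H →L[ℂ] H) x) ((S : H →L[ℂ] H) x) := by
      rw [← adjoint_inner_left B, ← adjoint_inner_left (S : H →L[ℂ] H), hSsa]
      congr 1
      rw [← mul_apply_eq_comp, hS, hSS]
      rfl
    rw [inner_self_eq_norm_sq_to_K, inner_self_eq_norm_sq_to_K] at h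
    exact (pow_left_inj₀ (norm_nonneg _) (norm_nonneg _) two_ne_zero).1 (by exact_mod_cast h)
  let E : H ≃L[ℂ] H := ContinuousLinearEquiv.unitsEquiv ℂ H S
  have hE (x : H) : E x = (S : H →L[ℂ] H) x := rfl
  refine ⟨⟨(E.symm.trans A).toLinearEquiv, fun x ↦ ?_⟩, fun T hT T' hT' hAT x ↦ ?_⟩
  · change ‖A (E.symm x)‖ = ‖x‖
    rw [hnorm, ← hE, E.apply_symm_apply]
  · have hBT : B ∘L T = T' ∘L B := by ext x; exact hAT x
    have hadj : adjoint B ∘L T' = T ∘L adjoint B := by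
      have h : adjoint T ∘L adjoint B = adjoint B ∘L adjoint T' := by
        rw [← adjoint_comp, hBT, adjoint_comp]
      have h1 : T ∘L adjoint T = ContinuousLinearMap.id ℂ H := Unitary.mul_star_self_of_mem hT
      have h2 : adjoint T' ∘L T' = ContinuousLinearMap.id ℂ H' := Unitary.star_mul_self_of_mem hT'
      calc adjoint B ∘L T' = (T ∘L adjoint T) ∘L adjoint B ∘L T' := by rw [h1, id_comp]
        _ = T ∘L (adjoint T ∘L adjoint B) ∘L T' := rfl
        _ = T ∘L adjoint B ∘L (adjoint T' ∘L T') := by rw [h]; rfl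
        _ = T ∘L adjoint B := by rw [h2, comp_id]
    have hPT : Commute P T := by
      change adjoint B ∘L (B ∘L T) = (T ∘L adjoint B) ∘L B
      rw [hBT, ← hadj]; rfl
    have hST : Commute (S : H →L[ℂ] H) T := hS ▸ hPT.cfcₙ_nnreal NNReal.sqrt
    change A (E.symm (T x)) = T' (A (E.symm x))
    rw [← hAT]
    congr 1
    rw [E.symm_apply_eq]
    calc T x = T (E (E.symm x)) := by rw [E.apply_symm_apply]
      _ = E (T (E.symm x)) := (DFunLike.congr_fun hST.eq (E.symm x)).symm

/-- An isomorphism `H × H ≃ H' × H'` that respects both coordinate subspaces and the diagonal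
acts diagonally. -/
theorem ContinuousLinearEquiv.exists_eq_prodMap_self
    {H H' : Type*} [NormedAddCommGroup H] [NormedSpace ℂ H]
    [NormedAddCommGroup H'] [NormedSpace ℂ H'] (R : (H × H) ≃L[ℂ] (H' × H'))
    (h₁ : ⇑R '' {p : H × H | ∃ x : H, p = (x, 0)} = {p : H' × H' | ∃ y : H', p = (y, 0)})
    (h₂ : ⇑R '' {p : H × H | ∃ x : H, p = (0, x)} = {p : H' × H' | ∃ y : H', p = (0, y)})
    (h₃ : ⇑R '' {p : H × H | ∃ x : H, p = (x, x)} = {p : H' × H' | ∃ y : H', p = (y, y)}) :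
    ∃ A : H ≃L[ℂ] H', ∀ x y, R (x, y) = (A x, A y) := by
  have hfst (x : H) : R (x, 0) = ((R (x, 0)).1, 0) := by
    obtain ⟨y, hy⟩ := h₁.subset ⟨(x, 0), ⟨x, rfl⟩, rfl⟩
    simp [hy]
  have hsnd (x : H) : R (0, x) = (0, (R (0, x)).2) := by
    obtain ⟨y, hy⟩ := h₂.subset ⟨(0, x), ⟨x, rfl⟩, rfl⟩
    simp [hy]
  have hadd (x y : H) : R (x, y) = ((R (x, 0)).1, (R (0, y)).2) := by
    have : ((x, y) : H × H) = (x, 0) + (0, y) := by simp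
    rw [this, map_add, hfst, hsnd]
    simp
  have hdiag (x : H) : (R (0, x)).2 = (R (x, 0)).1 := by
    obtain ⟨y, hy⟩ := h₃.subset ⟨(x, x), ⟨x, rfl⟩, rfl⟩
    rw [hadd, Prod.mk.injEq] at hy
    rw [hy.1, hy.2]
  have hsymm (y : H') : R.symm (y, 0) = ((R.symm (y, 0)).1, 0) := by
    obtain ⟨_, ⟨x, rfl⟩, hx⟩ := h₁.superset ⟨y, rfl⟩
    rw [← hx, R.symm_apply_apply]
  refine ⟨ContinuousLinearEquiv.equivOfInverse
    (.fst ℂ H' H' ∘L (R : (H × H) →L[ℂ] (H' × H')) ∘L .inl ℂ H H)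
    (.fst ℂ H H ∘L (R.symm : (H' × H') →L[ℂ] (H × H)) ∘L .inl ℂ H' H')
    (fun x ↦ ?_) (fun y ↦ ?_), fun x y ↦ ?_⟩
  · change (R.symm ((R (x, 0)).1, 0)).1 = x
    rw [← hfst, R.symm_apply_apply]
  · change (R ((R.symm (y, 0)).1, 0)).1 = y
    rw [← hsymm, R.apply_symm_apply]
  · rw [hadd, hdiag]; rfl

/-- If `A × A` maps the graph of `T` into the graph of `T'`, then `A` intertwines `T` and `T'`. -/
theorem intertwining_of_image_graph_subset {H H' : Type*} {R : H × H → H' × H'} {A : H → H'}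
    (hR : ∀ x y, R (x, y) = (A x, A y)) {T : H → H} {T' : H' → H'}
    (h : R '' {p : H × H | ∃ x : H, p = (T x, x)} ⊆ {p : H' × H' | ∃ y : H', p = (T' y, y)})
    (x : H) : A (T x) = T' (A x) := by
  obtain ⟨y, hy⟩ := h ⟨(T x, x), ⟨x, rfl⟩, rfl⟩
  rw [hR, Prod.mk.injEq] at hy
  rw [hy.1, hy.2]

/-- If the bijection `W` intertwines `f` and `f'` and `g` and `g'`, then `W × W` maps the curve
`x ↦ (f x, g x)` onto the curve `y ↦ (f' y, g' y)`. -/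
theorem image_eq_of_intertwining {H H' : Type*} {R : H × H → H' × H'} (W : H ≃ H')
    (hR : ∀ x y, R (x, y) = (W x, W y)) {f g : H → H} {f' g' : H' → H'}
    (hf : ∀ x, W (f x) = f' (W x)) (hg : ∀ x, W (g x) = g' (W x)) :
    R '' {p : H × H | ∃ x : H, p = (f x, g x)} = {p : H' × H' | ∃ y : H', p = (f' y, g' y)} := by
  ext p
  constructor
  · rintro ⟨_, ⟨x, rfl⟩, rfl⟩
    exact ⟨W x, by rw [hR, hf, hg]⟩
  · rintro ⟨y, rfl⟩
    exact ⟨_, ⟨W.symm y, rfl⟩, by rw [hR, hf, hg, W.apply_symm_apply]⟩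

/-- `S_{U,V} ≅ S_{Ũ,Ṽ}` iff the pair `(U,V)` is unitarily equivalent
to the pair `(Ũ,Ṽ)`. -/
theorem stmt_2
    {H H' : Type*}
    [NormedAddCommGroup H] [InnerProductSpace ℂ H] [CompleteSpace H]
    [NormedAddCommGroup H'] [InnerProductSpace ℂ H'] [CompleteSpace H']
    (U V : H →L[ℂ] H) (U' V' : H' →L[ℂ] H')
    (hU : U ∈ unitary (H →L[ℂ] H)) (hV : V ∈ unitary (H →L[ℂ] H))
    (hU' : U' ∈ unitary (H' →L[ℂ] H')) (hV' : V' ∈ unitary (H' →L[ℂ] H')) :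
    (∃ 𝓡 : (H × H) ≃L[ℂ] (H' × H'),
      (⇑𝓡 '' {p : H × H | ∃ x : H, p = (x, 0)} = {p : H' × H' | ∃ y : H', p = (y, 0)}) ∧
      (⇑𝓡 '' {p : H × H | ∃ x : H, p = (0, x)} = {p : H' × H' | ∃ y : H', p = (0, y)}) ∧
      (⇑𝓡 '' {p : H × H | ∃ x : H, p = (x, x)} = {p : H' × H' | ∃ y : H', p = (y, y)}) ∧
      (⇑𝓡 '' {p : H × H | ∃ x : H, p = (U x, x)} = {p : H' × H' | ∃ y : H', p = (U' y, y)}) ∧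
      (⇑𝓡 '' {p : H × H | ∃ x : H, p = (V x, x)} = {p : H' × H' | ∃ y : H', p = (V' y, y)})) ↔
    (∃ W : H ≃ₗᵢ[ℂ] H', (∀ x : H, W (U x) = U' (W x)) ∧ (∀ x : H, W (V x) = V' (W x))) := by
  constructor
  · rintro ⟨R, h₁, h₂, h₃, h₄, h₅⟩
    obtain ⟨A, hA⟩ := R.exists_eq_prodMap_self h₁ h₂ h₃
    obtain ⟨W, hW⟩ := A.exists_linearIsometryEquiv_intertwining
    exact ⟨W, hW U hU U' hU' (intertwining_of_image_graph_subset hA h₄.subset),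
      hW V hV V' hV' (intertwining_of_image_graph_subset hA h₅.subset)⟩
  · rintro ⟨W, hWU, hWV⟩
    let A : H ≃L[ℂ] H' := W.toContinuousLinearEquiv
    have hR (x y : H) : (A.prodCongr A) (x, y) = (W.toEquiv x, W.toEquiv y) := rfl
    have h0 (x : H) : W.toEquiv 0 = 0 := map_zero W
    refine ⟨A.prodCongr A, ?_, ?_, ?_, ?_, ?_⟩
    · exact image_eq_of_intertwining W.toEquiv hR (f := id) (f' := id) (fun _ ↦ rfl) h0
    · exact image_eq_of_intertwining W.toEquiv hR (g := id) (g' := id) h0 (fun _ ↦ rfl)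
    · exact image_eq_of_intertwining W.toEquiv hR (f := id) (f' := id) (g := id) (g' := id)
        (fun _ ↦ rfl) (fun _ ↦ rfl)
    · exact image_eq_of_intertwining W.toEquiv hR (g := id) (g' := id) hWU (fun _ ↦ rfl)
    · exact image_eq_of_intertwining W.toEquiv hR (g := id) (g' := id) hWV (fun _ ↦ rfl)
end

section
/- Let H, H̃, Ĥ, H̃̂ be complex Hilbert spaces and α > 1 a real number. Let P_1,…,P_n be orthogonal projections on H with ΣP_i = αI_H and P̃_1,…,P̃_n orthogonal projections on H̃ with ΣP̃_i = αI_{H̃}; let Γ_i : range P_i → H and Γ̃_i : range P̃_i → H̃ be the inclusion isometries. Let Δ_i : range P_i → Ĥ satisfy Δ_i*Δ_i = I, Σ_{i=1}^n Γ_iΔ_i* = 0, and Δ_i*Δ_j = −(1/(α−1))Γ_i*Γ_j for i ≠ j, and let Δ̃_i : range P̃_i → H̃̂ satisfy the analogous relations. Suppose C : H → H̃ is bounded with CP_i = P̃_iCP_i for all i, set C_i = Γ̃_i*CΓ_i and Ĉ = ((α−1)/α) Σ_{i=1}^n Δ̃_iC_iΔ_i*. Then Δ̃_k*Ĉ = C_kΔ_k*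 for every k = 1,…,n. -/
open ContinuousLinearMap in
/-- In the Coxeter-functor setup, with `C_i = Γ̃_i*CΓ_i` and
`Ĉ = ((α−1)/α) Σ Δ̃_i C_i Δ_i*`, one has `Δ̃_k* Ĉ = C_k Δ_k*` for every `k`. -/
theorem stmt_7
    {n : ℕ} {H H' E E' : Type*}
    [NormedAddCommGroup H] [InnerProductSpace ℂ H] [CompleteSpace H]
    [NormedAddCommGroup H'] [InnerProductSpace ℂ H'] [CompleteSpace H']
    [NormedAddCommGroup E] [InnerProductSpace ℂ E] [CompleteSpace E]
    [NormedAddCommGroup E'] [InnerProductSpace ℂ E'] [CompleteSpace E']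
    {K K' : Fin n → Type*}
    [∀ i, NormedAddCommGroup (K i)] [∀ i, InnerProductSpace ℂ (K i)] [∀ i, CompleteSpace (K i)]
    [∀ i, NormedAddCommGroup (K' i)] [∀ i, InnerProductSpace ℂ (K' i)] [∀ i, CompleteSpace (K' i)]
    (α : ℝ) (hα : 1 < α)
    (P : Fin n → H →L[ℂ] H)
    (hPsa : ∀ i, IsSelfAdjoint (P i)) (hPidem : ∀ i, P i ∘L P i = P i)
    (hPsum : ∑ i, P i = (α : ℂ) • (1 : H →L[ℂ] H))
    (P' : Fin n → H' →L[ℂ] H')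
    (hP'sa : ∀ i, IsSelfAdjoint (P' i)) (hP'idem : ∀ i, P' i ∘L P' i = P' i)
    (hP'sum : ∑ i, P' i = (α : ℂ) • (1 : H' →L[ℂ] H'))
    (Γ : ∀ i, K i →L[ℂ] H)
    (hΓ₁ : ∀ i, adjoint (Γ i) ∘L Γ i = 1) (hΓ₂ : ∀ i, Γ i ∘L adjoint (Γ i) = P i)
    (Γ' : ∀ i, K' i →L[ℂ] H')
    (hΓ'₁ : ∀ i, adjoint (Γ' i) ∘L Γ' i = 1) (hΓ'₂ : ∀ i, Γ' i ∘L adjoint (Γ' i) = P' i)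
    (Δ : ∀ i, K i →L[ℂ] E)
    (hΔ₁ : ∀ i, adjoint (Δ i) ∘L Δ i = 1)
    (hΔ₂ : ∑ i, Γ i ∘L adjoint (Δ i) = 0)
    (hΔ₃ : ∀ i j, i ≠ j →
      adjoint (Δ i) ∘L Δ j = (-((α : ℂ) - 1)⁻¹) • (adjoint (Γ i) ∘L Γ j))
    (Δ' : ∀ i, K' i →L[ℂ] E')
    (hΔ'₁ : ∀ i, adjoint (Δ' i) ∘L Δ' i = 1)
    (hΔ'₂ : ∑ i, Γ' i ∘L adjoint (Δ' i) = 0)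
    (hΔ'₃ : ∀ i j, i ≠ j →
      adjoint (Δ' i) ∘L Δ' j = (-((α : ℂ) - 1)⁻¹) • (adjoint (Γ' i) ∘L Γ' j))
    (C : H →L[ℂ] H')
    (hC : ∀ i, C ∘L P i = P' i ∘L (C ∘L P i)) :
    ∀ k, adjoint (Δ' k) ∘L
        ((((α : ℂ) - 1) / (α : ℂ)) •
          ∑ i, Δ' i ∘L (adjoint (Γ' i) ∘L C ∘L Γ i) ∘L adjoint (Δ i)) =
      (adjoint (Γ' k) ∘L C ∘L Γ k) ∘L adjoint (Δ k) := by
  intro k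
  have hα0 : (α : ℂ) ≠ 0 := by exact_mod_cast (by linarith : α ≠ 0)
  have hα1 : (α : ℂ) - 1 ≠ 0 := sub_ne_zero.mpr (by exact_mod_cast hα.ne')
  have range_compat : ∀ i (y : K i), Γ' i (adjoint (Γ' i) (C (Γ i y))) = C (Γ i y) := by
    intro i y
    have hPΓ : P i (Γ i y) = Γ i y := by
      have h := congrArg (Γ i) (DFunLike.congr_fun (hΓ₁ i) y)
      simpa [← hΓ₂ i] using h
    have h := DFunLike.congr_fun (hC i) (Γ i y)
    simp only [comp_apply, hPΓ] at h
    rw [← hΓ'₂ i] at h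
    exact h.symm
  ext x
  have term_eq : ∀ i, adjoint (Δ' k) (Δ' i (adjoint (Γ' i) (C (Γ i (adjoint (Δ i) x))))) =
      (-((α : ℂ) - 1)⁻¹) • adjoint (Γ' k) (C (Γ i (adjoint (Δ i) x))) +
      if i = k then (1 + ((α : ℂ) - 1)⁻¹) • adjoint (Γ' k) (C (Γ k (adjoint (Δ k) x)))
      else 0 := by
    intro i
    by_cases hik : i = k
    · subst hik
      have h := DFunLike.congr_fun (hΔ'₁ i) (adjoint (Γ' i) (C (Γ i (adjoint (Δ i) x))))
      simp only [comp_apply, one_apply_eq_self] at h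
      rw [h, if_pos rfl]
      module
    · have h := DFunLike.congr_fun (hΔ'₃ k i (Ne.symm hik))
        (adjoint (Γ' i) (C (Γ i (adjoint (Δ i) x))))
      simp only [comp_apply, smul_apply, range_compat] at h
      rw [h, if_neg hik, add_zero]
  have sum_eq_zero : ∑ i, Γ i (adjoint (Δ i) x) = 0 := by
    simpa [sum_apply] using DFunLike.congr_fun hΔ₂ x
  simp only [comp_apply, smul_apply, sum_apply, map_smul, map_sum, term_eq]
  rw [Finset.sum_add_distrib, ← Finset.smul_sum, ← map_sum, ← map_sum, sum_eq_zero,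
    Finset.sum_ite_eq' Finset.univ k, if_pos (Finset.mem_univ k), map_zero, map_zero, smul_zero,
    zero_add, smul_smul]
  convert one_smul ℂ _ using 2
  field_simp
  ring
end

section
/- Let H, H̃, Ĥ, H̃̂ be complex Hilbert spaces and α > 1 a real number. Let P_1,…,P_n be orthogonal projections on H with ΣP_i = αI_H and P̃_1,…,P̃_n orthogonal projections on H̃ with ΣP̃_i = αI_{H̃}; let Γ_i, Γ̃_i be the respective inclusion isometries of the ranges. Let Δ_i : range P_i → Ĥ and Δ̃_i : range P̃_i → H̃̂ satisfy Δ_i*Δ_i = I, Σ_i Γ_iΔ_i* = 0, Δ_i*Δ_j = −(1/(α−1))Γ_i*Γ_j for i ≠ j, and the analogous tilde relations. Suppose C : H → H̃ is bounded with CP_i = P̃_iCP_i for all i, set C_i = Γ̃_i*CΓ_i and Ĉ = ((α−1)/α) Σ_i Δ̃_iC_iΔ_i*. Then C_k = Δ̃_k*ĈΔ_k for every k = 1,…,n. -/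
open ContinuousLinearMap in
/-- In the Coxeter-functor setup, `C_k = Δ̃_k* Chat Δ_k` for every `k`. -/
theorem stmt_8
    {n : ℕ} {H H' E E' : Type*}
    [NormedAddCommGroup H] [InnerProductSpace ℂ H] [CompleteSpace H]
    [NormedAddCommGroup H'] [InnerProductSpace ℂ H'] [CompleteSpace H']
    [NormedAddCommGroup E] [InnerProductSpace ℂ E] [CompleteSpace E]
    [NormedAddCommGroup E'] [InnerProductSpace ℂ E'] [CompleteSpace E']
    {K K' : Fin n → Type*}
    [∀ i, NormedAddCommGroup (K i)] [∀ i, InnerProductSpace ℂ (K i)] [∀ i, CompleteSpace (K i)]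
    [∀ i, NormedAddCommGroup (K' i)] [∀ i, InnerProductSpace ℂ (K' i)] [∀ i, CompleteSpace (K' i)]
    (α : ℝ) (hα : 1 < α)
    (P : Fin n → H →L[ℂ] H)
    (hPsa : ∀ i, IsSelfAdjoint (P i)) (hPidem : ∀ i, P i ∘L P i = P i)
    (hPsum : ∑ i, P i = (α : ℂ) • (1 : H →L[ℂ] H))
    (P' : Fin n → H' →L[ℂ] H')
    (hP'sa : ∀ i, IsSelfAdjoint (P' i)) (hP'idem : ∀ i, P' i ∘L P' i = P' i)
    (hP'sum : ∑ i, P' i = (α : ℂ) • (1 : H' →L[ℂ] H'))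
    (Γ : ∀ i, K i →L[ℂ] H)
    (hΓ₁ : ∀ i, adjoint (Γ i) ∘L Γ i = 1) (hΓ₂ : ∀ i, Γ i ∘L adjoint (Γ i) = P i)
    (Γ' : ∀ i, K' i →L[ℂ] H')
    (hΓ'₁ : ∀ i, adjoint (Γ' i) ∘L Γ' i = 1) (hΓ'₂ : ∀ i, Γ' i ∘L adjoint (Γ' i) = P' i)
    (Δ : ∀ i, K i →L[ℂ] E)
    (hΔ₁ : ∀ i, adjoint (Δ i) ∘L Δ i = 1)
    (hΔ₂ : ∑ i, Γ i ∘L adjoint (Δ i) = 0)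
    (hΔ₃ : ∀ i j, i ≠ j →
      adjoint (Δ i) ∘L Δ j = (-((α : ℂ) - 1)⁻¹) • (adjoint (Γ i) ∘L Γ j))
    (Δ' : ∀ i, K' i →L[ℂ] E')
    (hΔ'₁ : ∀ i, adjoint (Δ' i) ∘L Δ' i = 1)
    (hΔ'₂ : ∑ i, Γ' i ∘L adjoint (Δ' i) = 0)
    (hΔ'₃ : ∀ i j, i ≠ j →
      adjoint (Δ' i) ∘L Δ' j = (-((α : ℂ) - 1)⁻¹) • (adjoint (Γ' i) ∘L Γ' j))
    (C : H →L[ℂ] H')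
    (hC : ∀ i, C ∘L P i = P' i ∘L (C ∘L P i))
    (Chat : E →L[ℂ] E')
    (hChat : Chat = (((α : ℂ) - 1) / (α : ℂ)) •
      ∑ i, Δ' i ∘L (adjoint (Γ' i) ∘L C ∘L Γ i) ∘L adjoint (Δ i)) :
    ∀ k, adjoint (Γ' k) ∘L C ∘L Γ k = adjoint (Δ' k) ∘L Chat ∘L Δ k := by
  intro k
  have hα₀ : (α : ℂ) ≠ 0 := by exact_mod_cast (by linarith : α ≠ 0)
  have hα₁ : (α : ℂ) - 1 ≠ 0 := by exact_mod_cast (by linarith : α - 1 ≠ 0)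
  have hΓC (i) (y : K i) : Γ' i (adjoint (Γ' i) (C (Γ i y))) = C (Γ i y) := by
    have hP : P i (Γ i y) = Γ i y := by
      rw [← hΓ₂ i]
      exact congrArg (Γ i) (DFunLike.congr_fun (hΓ₁ i) y)
    have h := DFunLike.congr_fun (hC i) (Γ i y)
    simp only [comp_apply, hP] at h
    rw [← hΓ'₂ i] at h
    exact h.symm
  ext x
  have hterm (i) : adjoint (Δ' k) (Δ' i (adjoint (Γ' i) (C (Γ i (adjoint (Δ i) (Δ k x)))))) =
      (-((α : ℂ) - 1)⁻¹) • adjoint (Γ' k) (C (Γ i (adjoint (Δ i) (Δ k x)))) +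
        if i = k then ((α : ℂ) / ((α : ℂ) - 1)) • adjoint (Γ' k) (C (Γ k x)) else 0 := by
    by_cases hik : i = k
    · subst hik
      have h₁ : adjoint (Δ i) (Δ i x) = x := DFunLike.congr_fun (hΔ₁ i) x
      have h₂ (y) : adjoint (Δ' i) (Δ' i y) = y := DFunLike.congr_fun (hΔ'₁ i) y
      rw [h₁, h₂, if_pos rfl, ← add_smul]
      have : -((α : ℂ) - 1)⁻¹ + (α : ℂ) / ((α : ℂ) - 1) = 1 := by
        field_simp
        ring
      rw [this, one_smul]
    · have h (y) := DFunLike.congr_fun (hΔ'₃ k i (Ne.symm hik)) y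
      simp only [comp_apply, smul_apply] at h
      rw [h, hΓC, if_neg hik, add_zero]
  have hsum : ∑ i, Γ i (adjoint (Δ i) (Δ k x)) = 0 := by
    simpa [sum_apply] using DFunLike.congr_fun hΔ₂ (Δ k x)
  subst hChat
  simp only [comp_apply, smul_apply, sum_apply, map_smul, map_sum]
  simp only [hterm, Finset.sum_add_distrib, ← Finset.smul_sum, ← map_sum, hsum]
  simp only [map_zero, smul_zero, zero_add, Finset.sum_ite_eq', Finset.mem_univ, if_true, smul_smul]
  rw [div_mul_div_cancel₀ hα₀, div_self hα₁, one_smul]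
end

section
/- Under the hypotheses of the Coxeter-functor setup (orthogonal projections P_i on H with ΣP_i = αI_H, α > 1, projections P̃_i on H̃ with ΣP̃_i = αI_{H̃}, inclusion isometries Γ_i, Γ̃_i, and operators Δ_i, Δ̃_i satisfying Δ_i*Δ_i = I, Σ_iΓ_iΔ_i* = 0, Δ_i*Δ_j = −(1/(α−1))Γ_i*Γ_j for i ≠ j, together with the tilde analogues), let C : H → H̃ be bounded with CP_i = P̃_iCP_i for all i, C_i = Γ̃_i*CΓ_i, Ĉ = ((α−1)/α)Σ_iΔ̃_iC_iΔ_i*, and set Q_k = Δ_kΔ_k*, Q̃_k = Δ̃_kΔ̃_k*. Then Q̃_kĈ = Q̃_kĈQ_k for all k = 1,…,n; equivalently, Ĉ*Q̃_k = Q_kĈ*Q̃_k for all k, so Ĉ* intertwines the projection families (Q̃_k) and (Q_k). -/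
section CoxeterFunctor

open ContinuousLinearMap

/-- If `CΓΓ* = Γ'Γ'*CΓΓ*` for an isometry `Γ`, then `Γ'(Γ'*CΓ) = CΓ`. -/
lemma isometry_comp_compression {H H' K K' : Type*}
    [NormedAddCommGroup H] [InnerProductSpace ℂ H] [CompleteSpace H]
    [NormedAddCommGroup H'] [InnerProductSpace ℂ H'] [CompleteSpace H']
    [NormedAddCommGroup K] [InnerProductSpace ℂ K] [CompleteSpace K]
    [NormedAddCommGroup K'] [InnerProductSpace ℂ K'] [CompleteSpace K']
    {Γ : K →L[ℂ] H} {Γ' : K' →L[ℂ] H'} {C : H →L[ℂ] H'}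
    (hΓ : adjoint Γ ∘L Γ = 1)
    (hC : C ∘L (Γ ∘L adjoint Γ) = (Γ' ∘L adjoint Γ') ∘L (C ∘L (Γ ∘L adjoint Γ))) :
    Γ' ∘L (adjoint Γ' ∘L C ∘L Γ) = C ∘L Γ := by
  ext x
  have hx : adjoint Γ (Γ x) = x := DFunLike.congr_fun hΓ x
  simpa [hx] using (DFunLike.congr_fun hC (Γ x)).symm

/-- A family `D i : K i → K' i` with `Γ' i ∘ D i = C ∘ Γ i` satisfies
`Δ'_k* (∑ i, Δ'_i D_i Δ_i*) = (1 + β) D_k Δ_k*`, where `Δ'_i*Δ'_j = -β Γ'_i*Γ'_j` off the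
diagonal and `∑ i, Γ_i Δ_i* = 0`. -/
lemma adjoint_comp_sum_conj {ι H H' E E' : Type*} [Fintype ι]
    [NormedAddCommGroup H] [InnerProductSpace ℂ H]
    [NormedAddCommGroup H'] [InnerProductSpace ℂ H'] [CompleteSpace H']
    [NormedAddCommGroup E] [InnerProductSpace ℂ E] [CompleteSpace E]
    [NormedAddCommGroup E'] [InnerProductSpace ℂ E'] [CompleteSpace E']
    {K K' : ι → Type*}
    [∀ i, NormedAddCommGroup (K i)] [∀ i, InnerProductSpace ℂ (K i)] [∀ i, CompleteSpace (K i)]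
    [∀ i, NormedAddCommGroup (K' i)] [∀ i, InnerProductSpace ℂ (K' i)] [∀ i, CompleteSpace (K' i)]
    {β : ℂ} {Γ : ∀ i, K i →L[ℂ] H} {Γ' : ∀ i, K' i →L[ℂ] H'}
    {Δ : ∀ i, K i →L[ℂ] E} {Δ' : ∀ i, K' i →L[ℂ] E'}
    (hΓ' : ∀ i, adjoint (Γ' i) ∘L Γ' i = 1)
    (hΔ : ∑ i, Γ i ∘L adjoint (Δ i) = 0)
    (hΔ'₁ : ∀ i, adjoint (Δ' i) ∘L Δ' i = 1)
    (hΔ'₂ : ∀ i j, i ≠ j → adjoint (Δ' i) ∘L Δ' j = (-β) • (adjoint (Γ' i) ∘L Γ' j))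
    {C : H →L[ℂ] H'} {D : ∀ i, K i →L[ℂ] K' i} (hD : ∀ i, Γ' i ∘L D i = C ∘L Γ i) (k : ι) :
    adjoint (Δ' k) ∘L ∑ i, Δ' i ∘L D i ∘L adjoint (Δ i) =
      (1 + β) • (D k ∘L adjoint (Δ k)) := by
  classical
  ext x
  have hterm : ∀ i, adjoint (Δ' k) (Δ' i (D i (adjoint (Δ i) x))) =
      (-β) • adjoint (Γ' k) (C (Γ i (adjoint (Δ i) x))) +
        if i = k then (1 + β) • D k (adjoint (Δ k) x) else 0 := by
    intro i
    rw [← show Γ' i (D i (adjoint (Δ i) x)) = C (Γ i (adjoint (Δ i) x)) from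
      DFunLike.congr_fun (hD i) _]
    by_cases h : i = k
    · subst h
      rw [show adjoint (Δ' i) (Δ' i (D i (adjoint (Δ i) x))) = D i (adjoint (Δ i) x) from
          DFunLike.congr_fun (hΔ'₁ i) _,
        show adjoint (Γ' i) (Γ' i (D i (adjoint (Δ i) x))) = D i (adjoint (Δ i) x) from
          DFunLike.congr_fun (hΓ' i) _, if_pos rfl]
      module
    · rw [if_neg h, add_zero]
      exact DFunLike.congr_fun (hΔ'₂ k i (Ne.symm h)) _
  have hx : ∑ i, Γ i (adjoint (Δ i) x) = 0 := by
    simpa [sum_apply] using DFunLike.congr_fun hΔ x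
  simp only [comp_apply, sum_apply, map_sum, hterm, Finset.sum_add_distrib, ← Finset.smul_sum,
    smul_apply]
  simp [← map_sum, hx]

end CoxeterFunctor

open ContinuousLinearMap in
/-- In the Coxeter-functor setup, with `Q_k = Δ_kΔ_k*`, `Q̃_k = Δ̃_kΔ̃_k*`,
one has `Q̃_kChat = Q̃_kChatQ_k` for all `k`; equivalently `Chat*Q̃_k = Q_kChat*Q̃_k` for all `k`. -/
theorem stmt_9
    {n : ℕ} {H H' E E' : Type*}
    [NormedAddCommGroup H] [InnerProductSpace ℂ H] [CompleteSpace H]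
    [NormedAddCommGroup H'] [InnerProductSpace ℂ H'] [CompleteSpace H']
    [NormedAddCommGroup E] [InnerProductSpace ℂ E] [CompleteSpace E]
    [NormedAddCommGroup E'] [InnerProductSpace ℂ E'] [CompleteSpace E']
    {K K' : Fin n → Type*}
    [∀ i, NormedAddCommGroup (K i)] [∀ i, InnerProductSpace ℂ (K i)] [∀ i, CompleteSpace (K i)]
    [∀ i, NormedAddCommGroup (K' i)] [∀ i, InnerProductSpace ℂ (K' i)] [∀ i, CompleteSpace (K' i)]
    (α : ℝ) (hα : 1 < α)
    (P : Fin n → H →L[ℂ] H)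
    (hPsa : ∀ i, IsSelfAdjoint (P i)) (hPidem : ∀ i, P i ∘L P i = P i)
    (hPsum : ∑ i, P i = (α : ℂ) • (1 : H →L[ℂ] H))
    (P' : Fin n → H' →L[ℂ] H')
    (hP'sa : ∀ i, IsSelfAdjoint (P' i)) (hP'idem : ∀ i, P' i ∘L P' i = P' i)
    (hP'sum : ∑ i, P' i = (α : ℂ) • (1 : H' →L[ℂ] H'))
    (Γ : ∀ i, K i →L[ℂ] H)
    (hΓ₁ : ∀ i, adjoint (Γ i) ∘L Γ i = 1) (hΓ₂ : ∀ i, Γ i ∘L adjoint (Γ i) = P i)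
    (Γ' : ∀ i, K' i →L[ℂ] H')
    (hΓ'₁ : ∀ i, adjoint (Γ' i) ∘L Γ' i = 1) (hΓ'₂ : ∀ i, Γ' i ∘L adjoint (Γ' i) = P' i)
    (Δ : ∀ i, K i →L[ℂ] E)
    (hΔ₁ : ∀ i, adjoint (Δ i) ∘L Δ i = 1)
    (hΔ₂ : ∑ i, Γ i ∘L adjoint (Δ i) = 0)
    (hΔ₃ : ∀ i j, i ≠ j →
      adjoint (Δ i) ∘L Δ j = (-((α : ℂ) - 1)⁻¹) • (adjoint (Γ i) ∘L Γ j))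
    (Δ' : ∀ i, K' i →L[ℂ] E')
    (hΔ'₁ : ∀ i, adjoint (Δ' i) ∘L Δ' i = 1)
    (hΔ'₂ : ∑ i, Γ' i ∘L adjoint (Δ' i) = 0)
    (hΔ'₃ : ∀ i j, i ≠ j →
      adjoint (Δ' i) ∘L Δ' j = (-((α : ℂ) - 1)⁻¹) • (adjoint (Γ' i) ∘L Γ' j))
    (C : H →L[ℂ] H')
    (hC : ∀ i, C ∘L P i = P' i ∘L (C ∘L P i))
    (Chat : E →L[ℂ] E')
    (hChat : Chat = (((α : ℂ) - 1) / (α : ℂ)) •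
      ∑ i, Δ' i ∘L (adjoint (Γ' i) ∘L C ∘L Γ i) ∘L adjoint (Δ i)) :
    (∀ k, (Δ' k ∘L adjoint (Δ' k)) ∘L Chat =
      (Δ' k ∘L adjoint (Δ' k)) ∘L Chat ∘L (Δ k ∘L adjoint (Δ k))) ∧
    (∀ k, adjoint Chat ∘L (Δ' k ∘L adjoint (Δ' k)) =
      (Δ k ∘L adjoint (Δ k)) ∘L adjoint Chat ∘L (Δ' k ∘L adjoint (Δ' k))) := by
  have hα₀ : (α : ℂ) ≠ 0 := by exact_mod_cast (by linarith : α ≠ 0)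
  have hα₁ : (α : ℂ) - 1 ≠ 0 := sub_ne_zero.2 (by exact_mod_cast hα.ne')
  have hinter : ∀ k, adjoint (Δ' k) ∘L Chat =
      (adjoint (Γ' k) ∘L C ∘L Γ k) ∘L adjoint (Δ k) := by
    intro k
    have hD : ∀ i, Γ' i ∘L (adjoint (Γ' i) ∘L C ∘L Γ i) = C ∘L Γ i := fun i =>
      isometry_comp_compression (hΓ₁ i) (by rw [hΓ₂, hΓ'₂]; exact hC i)
    rw [hChat, comp_smul, adjoint_comp_sum_conj hΓ'₁ hΔ₂ hΔ'₁ hΔ'₃ hD k, smul_smul,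
      show ((α : ℂ) - 1) / α * (1 + ((α : ℂ) - 1)⁻¹) = 1 by field_simp; ring, one_smul]
  have hQ : ∀ k, (Δ' k ∘L adjoint (Δ' k)) ∘L Chat =
      (Δ' k ∘L adjoint (Δ' k)) ∘L Chat ∘L (Δ k ∘L adjoint (Δ k)) := by
    intro k
    have hΔk : adjoint (Δ k) ∘L (Δ k ∘L adjoint (Δ k)) = adjoint (Δ k) := by
      rw [← comp_assoc, hΔ₁]; rfl
    rw [← comp_assoc _ Chat, comp_assoc _ _ Chat, hinter, comp_assoc (Δ' k),
      comp_assoc _ (adjoint (Δ k)), hΔk]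
  refine ⟨hQ, fun k => ?_⟩
  simpa only [adjoint_comp, adjoint_adjoint, comp_assoc] using congrArg adjoint (hQ k)
end

section
/- Under the hypotheses of the Coxeter-functor setup (orthogonal projections P_i on H with ΣP_i = αI_H, α > 1, projections P̃_i on H̃ with ΣP̃_i = αI_{H̃}, inclusion isometries Γ_i, Γ̃_i, and operators Δ_i, Δ̃_i satisfying the Coxeter relations), suppose C and D are bounded operators H → H̃ with CP_i = P̃_iCP_i and DP_i = P̃_iDP_i for all i, and define Ĉ = ((α−1)/α)Σ_iΔ̃_i(Γ̃_i*CΓ_i)Δ_i* and D̂ = ((α−1)/α)Σ_iΔ̃_i(Γ̃_i*DΓ_i)Δ_i*. If Ĉ = D̂, then C = D. (Univalence of the functor 𝓢′.) -/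
open ContinuousLinearMap in
/-- Summing the corners `Γ'ᵢ* C Γᵢ` of an intertwiner recovers `α C`. -/
theorem sum_comp_corner_comp_adjoint
    {n : ℕ} {H H' : Type*}
    [NormedAddCommGroup H] [InnerProductSpace ℂ H] [CompleteSpace H]
    [NormedAddCommGroup H'] [InnerProductSpace ℂ H'] [CompleteSpace H']
    {K K' : Fin n → Type*}
    [∀ i, NormedAddCommGroup (K i)] [∀ i, InnerProductSpace ℂ (K i)] [∀ i, CompleteSpace (K i)]
    [∀ i, NormedAddCommGroup (K' i)] [∀ i, InnerProductSpace ℂ (K' i)] [∀ i, CompleteSpace (K' i)]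
    {a : ℂ} {P : Fin n → H →L[ℂ] H} (hPsum : ∑ i, P i = a • (1 : H →L[ℂ] H))
    {P' : Fin n → H' →L[ℂ] H'}
    {Γ : ∀ i, K i →L[ℂ] H} (hΓ₂ : ∀ i, Γ i ∘L adjoint (Γ i) = P i)
    {Γ' : ∀ i, K' i →L[ℂ] H'} (hΓ'₂ : ∀ i, Γ' i ∘L adjoint (Γ' i) = P' i)
    {C : H →L[ℂ] H'} (hC : ∀ i, C ∘L P i = P' i ∘L (C ∘L P i)) :
    ∑ i, Γ' i ∘L (adjoint (Γ' i) ∘L C ∘L Γ i) ∘L adjoint (Γ i) = a • C := by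
  calc ∑ i, Γ' i ∘L (adjoint (Γ' i) ∘L C ∘L Γ i) ∘L adjoint (Γ i)
      = ∑ i, C ∘L P i := by
        refine Finset.sum_congr rfl fun i _ => ?_
        rw [hC i, ← hΓ₂ i, ← hΓ'₂ i]
        rfl
    _ = C ∘L ∑ i, P i := by ext x; simp
    _ = a • C := by rw [hPsum]; ext x; simp

open ContinuousLinearMap in
/-- The corner `Γ'ₖ* C Γₖ` of an intertwiner is recovered, up to the factor `a / (a - 1)`,
by compressing `∑ᵢ Δ'ᵢ (Γ'ᵢ* C Γᵢ) Δᵢ*` with `Δ'ₖ` and `Δₖ`. -/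
theorem adjoint_comp_sum_corner_comp
    {n : ℕ} {H H' E E' : Type*}
    [NormedAddCommGroup H] [InnerProductSpace ℂ H] [CompleteSpace H]
    [NormedAddCommGroup H'] [InnerProductSpace ℂ H'] [CompleteSpace H']
    [NormedAddCommGroup E] [InnerProductSpace ℂ E] [CompleteSpace E]
    [NormedAddCommGroup E'] [InnerProductSpace ℂ E'] [CompleteSpace E']
    {K K' : Fin n → Type*}
    [∀ i, NormedAddCommGroup (K i)] [∀ i, InnerProductSpace ℂ (K i)] [∀ i, CompleteSpace (K i)]
    [∀ i, NormedAddCommGroup (K' i)] [∀ i, InnerProductSpace ℂ (K' i)] [∀ i, CompleteSpace (K' i)]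
    {a : ℂ} (ha : a - 1 ≠ 0)
    {P : Fin n → H →L[ℂ] H} (hPsum : ∑ i, P i = a • (1 : H →L[ℂ] H))
    {P' : Fin n → H' →L[ℂ] H'}
    {Γ : ∀ i, K i →L[ℂ] H}
    (hΓ₁ : ∀ i, adjoint (Γ i) ∘L Γ i = 1) (hΓ₂ : ∀ i, Γ i ∘L adjoint (Γ i) = P i)
    {Γ' : ∀ i, K' i →L[ℂ] H'}
    (hΓ'₁ : ∀ i, adjoint (Γ' i) ∘L Γ' i = 1) (hΓ'₂ : ∀ i, Γ' i ∘L adjoint (Γ' i) = P' i)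
    {Δ : ∀ i, K i →L[ℂ] E} (hΔ₁ : ∀ i, adjoint (Δ i) ∘L Δ i = 1)
    (hΔ₃ : ∀ i j, i ≠ j → adjoint (Δ i) ∘L Δ j = (-(a - 1)⁻¹) • (adjoint (Γ i) ∘L Γ j))
    {Δ' : ∀ i, K' i →L[ℂ] E'} (hΔ'₁ : ∀ i, adjoint (Δ' i) ∘L Δ' i = 1)
    (hΔ'₃ : ∀ i j, i ≠ j →
      adjoint (Δ' i) ∘L Δ' j = (-(a - 1)⁻¹) • (adjoint (Γ' i) ∘L Γ' j))
    {C : H →L[ℂ] H'} (hC : ∀ i, C ∘L P i = P' i ∘L (C ∘L P i)) (k : Fin n) :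
    adjoint (Δ' k) ∘L (∑ i, Δ' i ∘L (adjoint (Γ' i) ∘L C ∘L Γ i) ∘L adjoint (Δ i)) ∘L Δ k =
      (a / (a - 1)) • (adjoint (Γ' k) ∘L C ∘L Γ k) := by
  ext x
  have hsum := congrArg (fun T : H →L[ℂ] H' => adjoint (Γ' k) (T (Γ k x)))
    (sum_comp_corner_comp_adjoint hPsum hΓ₂ hΓ'₂ hC)
  have hΓx : adjoint (Γ k) (Γ k x) = x := congrArg (fun T => T x) (hΓ₁ k)
  have hΔx : adjoint (Δ k) (Δ k x) = x := congrArg (fun T => T x) (hΔ₁ k)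
  have hΓ'y (y) : adjoint (Γ' k) (Γ' k y) = y := congrArg (fun T => T y) (hΓ'₁ k)
  have hΔ'y (y) : adjoint (Δ' k) (Δ' k y) = y := congrArg (fun T => T y) (hΔ'₁ k)
  have hoff : ∀ i ∈ Finset.univ.erase k,
      adjoint (Δ' k) (Δ' i (adjoint (Γ' i) (C (Γ i (adjoint (Δ i) (Δ k x)))))) =
        ((a - 1)⁻¹ * (a - 1)⁻¹) •
          adjoint (Γ' k) (Γ' i (adjoint (Γ' i) (C (Γ i (adjoint (Γ i) (Γ k x)))))) := by
    intro i hi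
    have hik := Finset.ne_of_mem_erase hi
    have h₁ : adjoint (Δ i) (Δ k x) = (-(a - 1)⁻¹) • adjoint (Γ i) (Γ k x) :=
      congrArg (fun T => T x) (hΔ₃ i k hik)
    have h₂ (y) : adjoint (Δ' k) (Δ' i y) = (-(a - 1)⁻¹) • adjoint (Γ' k) (Γ' i y) :=
      congrArg (fun T => T y) (hΔ'₃ k i hik.symm)
    rw [h₁, h₂]
    simp only [map_smul, smul_smul, neg_mul_neg]
  simp only [sum_apply, comp_apply, map_sum, smul_apply, map_smul] at hsum ⊢
  rw [← Finset.add_sum_erase _ _ (Finset.mem_univ k), hΓx, hΓ'y, ← eq_sub_iff_add_eq'] at hsum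
  rw [← Finset.add_sum_erase _ _ (Finset.mem_univ k), hΔx, hΔ'y, Finset.sum_congr rfl hoff,
    ← Finset.smul_sum, hsum]
  match_scalars
  field_simp
  ring

open ContinuousLinearMap in
/-- Univalence of the functor `𝓢′`: if `Ĉ = D̂` then `C = D`. -/
theorem stmt_10
    {n : ℕ} {H H' E E' : Type*}
    [NormedAddCommGroup H] [InnerProductSpace ℂ H] [CompleteSpace H]
    [NormedAddCommGroup H'] [InnerProductSpace ℂ H'] [CompleteSpace H']
    [NormedAddCommGroup E] [InnerProductSpace ℂ E] [CompleteSpace E]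
    [NormedAddCommGroup E'] [InnerProductSpace ℂ E'] [CompleteSpace E']
    {K K' : Fin n → Type*}
    [∀ i, NormedAddCommGroup (K i)] [∀ i, InnerProductSpace ℂ (K i)] [∀ i, CompleteSpace (K i)]
    [∀ i, NormedAddCommGroup (K' i)] [∀ i, InnerProductSpace ℂ (K' i)] [∀ i, CompleteSpace (K' i)]
    (α : ℝ) (hα : 1 < α)
    (P : Fin n → H →L[ℂ] H)
    (hPsa : ∀ i, IsSelfAdjoint (P i)) (hPidem : ∀ i, P i ∘L P i = P i)
    (hPsum : ∑ i, P i = (α : ℂ) • (1 : H →L[ℂ] H))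
    (P' : Fin n → H' →L[ℂ] H')
    (hP'sa : ∀ i, IsSelfAdjoint (P' i)) (hP'idem : ∀ i, P' i ∘L P' i = P' i)
    (hP'sum : ∑ i, P' i = (α : ℂ) • (1 : H' →L[ℂ] H'))
    (Γ : ∀ i, K i →L[ℂ] H)
    (hΓ₁ : ∀ i, adjoint (Γ i) ∘L Γ i = 1) (hΓ₂ : ∀ i, Γ i ∘L adjoint (Γ i) = P i)
    (Γ' : ∀ i, K' i →L[ℂ] H')
    (hΓ'₁ : ∀ i, adjoint (Γ' i) ∘L Γ' i = 1) (hΓ'₂ : ∀ i, Γ' i ∘L adjoint (Γ' i) = P' i)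
    (Δ : ∀ i, K i →L[ℂ] E)
    (hΔ₁ : ∀ i, adjoint (Δ i) ∘L Δ i = 1)
    (hΔ₂ : ∑ i, Γ i ∘L adjoint (Δ i) = 0)
    (hΔ₃ : ∀ i j, i ≠ j →
      adjoint (Δ i) ∘L Δ j = (-((α : ℂ) - 1)⁻¹) • (adjoint (Γ i) ∘L Γ j))
    (Δ' : ∀ i, K' i →L[ℂ] E')
    (hΔ'₁ : ∀ i, adjoint (Δ' i) ∘L Δ' i = 1)
    (hΔ'₂ : ∑ i, Γ' i ∘L adjoint (Δ' i) = 0)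
    (hΔ'₃ : ∀ i j, i ≠ j →
      adjoint (Δ' i) ∘L Δ' j = (-((α : ℂ) - 1)⁻¹) • (adjoint (Γ' i) ∘L Γ' j))
    (C D : H →L[ℂ] H')
    (hC : ∀ i, C ∘L P i = P' i ∘L (C ∘L P i))
    (hD : ∀ i, D ∘L P i = P' i ∘L (D ∘L P i))
    (hCD : (((α : ℂ) - 1) / (α : ℂ)) •
        ∑ i, Δ' i ∘L (adjoint (Γ' i) ∘L C ∘L Γ i) ∘L adjoint (Δ i) =
      (((α : ℂ) - 1) / (α : ℂ)) •
        ∑ i, Δ' i ∘L (adjoint (Γ' i) ∘L D ∘L Γ i) ∘L adjoint (Δ i)) :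
    C = D := by
  have hα₀ : (α : ℂ) ≠ 0 := by exact_mod_cast (by linarith : α ≠ 0)
  have hα₁ : (α : ℂ) - 1 ≠ 0 := sub_ne_zero.2 (by exact_mod_cast hα.ne')
  have hsum := smul_right_injective _ (div_ne_zero hα₁ hα₀) hCD
  have hcorner (k) : adjoint (Γ' k) ∘L C ∘L Γ k = adjoint (Γ' k) ∘L D ∘L Γ k := by
    apply smul_right_injective _ (div_ne_zero hα₀ hα₁)
    change ((α : ℂ) / (α - 1)) • _ = ((α : ℂ) / (α - 1)) • _
    rw [← adjoint_comp_sum_corner_comp hα₁ hPsum hΓ₁ hΓ₂ hΓ'₁ hΓ'₂ hΔ₁ hΔ₃ hΔ'₁ hΔ'₃ hC k,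
      ← adjoint_comp_sum_corner_comp hα₁ hPsum hΓ₁ hΓ₂ hΓ'₁ hΓ'₂ hΔ₁ hΔ₃ hΔ'₁ hΔ'₃ hD k]
    exact congrArg (fun T => adjoint (Δ' k) ∘L T ∘L Δ k) hsum
  apply smul_right_injective _ hα₀
  change (α : ℂ) • C = (α : ℂ) • D
  rw [← sum_comp_corner_comp_adjoint hPsum hΓ₂ hΓ'₂ hC,
    ← sum_comp_corner_comp_adjoint hPsum hΓ₂ hΓ'₂ hD]
  simp only [hcorner]
end

section
/- Under the hypotheses of the Coxeter-functor setup (with projection families P_i on H and P̃_i on H̃, both summing to αI with α > 1, inclusion isometries Γ_i, Γ̃_i, and operators Δ_i, Δ̃_i satisfying the Coxeter relations with Q_k = Δ_kΔ_k*, Q̃_k = Δ̃_kΔ̃_k*), let r̂ : Ĥ → H̃̂ be a bounded operator with Q̃_k r̂ = Q̃_k r̂ Q_k for all k, set r_k = Δ̃_k* r̂ Δ_k and r = (1/α) Σ_{i=1}^n Γ̃_i r_i Γ_i*. Then for every k = 1,…,n: (i) rΓ_k = Γ̃_k r_k; (ii) r_k = Γ̃_k* r Γ_k; and consequently (iii)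 rP_k = P̃_k r P_k, i.e., r maps range P_k into range P̃_k. (Completeness of the functor 𝓢′.) -/
open ContinuousLinearMap in
/-- Completeness of the functor `𝓢′`: with `r_k = Δ̃_k* rhat Δ_k` and
`r = (1/α) Σ Γ̃_i r_i Γ_i*`, one has `rΓ_k = Γ̃_k r_k`, `r_k = Γ̃_k* r Γ_k`, and
`rP_k = P̃_k r P_k` for all `k`. -/
theorem stmt_12
    {n : ℕ} {H H' E E' : Type*}
    [NormedAddCommGroup H] [InnerProductSpace ℂ H] [CompleteSpace H]
    [NormedAddCommGroup H'] [InnerProductSpace ℂ H'] [CompleteSpace H']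
    [NormedAddCommGroup E] [InnerProductSpace ℂ E] [CompleteSpace E]
    [NormedAddCommGroup E'] [InnerProductSpace ℂ E'] [CompleteSpace E']
    {K K' : Fin n → Type*}
    [∀ i, NormedAddCommGroup (K i)] [∀ i, InnerProductSpace ℂ (K i)] [∀ i, CompleteSpace (K i)]
    [∀ i, NormedAddCommGroup (K' i)] [∀ i, InnerProductSpace ℂ (K' i)] [∀ i, CompleteSpace (K' i)]
    (α : ℝ) (hα : 1 < α)
    (P : Fin n → H →L[ℂ] H)
    (hPsa : ∀ i, IsSelfAdjoint (P i)) (hPidem : ∀ i, P i ∘L P i = P i)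
    (hPsum : ∑ i, P i = (α : ℂ) • (1 : H →L[ℂ] H))
    (P' : Fin n → H' →L[ℂ] H')
    (hP'sa : ∀ i, IsSelfAdjoint (P' i)) (hP'idem : ∀ i, P' i ∘L P' i = P' i)
    (hP'sum : ∑ i, P' i = (α : ℂ) • (1 : H' →L[ℂ] H'))
    (Γ : ∀ i, K i →L[ℂ] H)
    (hΓ₁ : ∀ i, adjoint (Γ i) ∘L Γ i = 1) (hΓ₂ : ∀ i, Γ i ∘L adjoint (Γ i) = P i)
    (Γ' : ∀ i, K' i →L[ℂ] H')
    (hΓ'₁ : ∀ i, adjoint (Γ' i) ∘L Γ' i = 1) (hΓ'₂ : ∀ i, Γ' i ∘L adjoint (Γ' i) = P' i)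
    (Δ : ∀ i, K i →L[ℂ] E)
    (hΔ₁ : ∀ i, adjoint (Δ i) ∘L Δ i = 1)
    (hΔ₂ : ∑ i, Γ i ∘L adjoint (Δ i) = 0)
    (hΔ₃ : ∀ i j, i ≠ j →
      adjoint (Δ i) ∘L Δ j = (-((α : ℂ) - 1)⁻¹) • (adjoint (Γ i) ∘L Γ j))
    (Δ' : ∀ i, K' i →L[ℂ] E')
    (hΔ'₁ : ∀ i, adjoint (Δ' i) ∘L Δ' i = 1)
    (hΔ'₂ : ∑ i, Γ' i ∘L adjoint (Δ' i) = 0)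
    (hΔ'₃ : ∀ i j, i ≠ j →
      adjoint (Δ' i) ∘L Δ' j = (-((α : ℂ) - 1)⁻¹) • (adjoint (Γ' i) ∘L Γ' j))
    (rhat : E →L[ℂ] E')
    (hrhat : ∀ k, (Δ' k ∘L adjoint (Δ' k)) ∘L rhat =
      (Δ' k ∘L adjoint (Δ' k)) ∘L rhat ∘L (Δ k ∘L adjoint (Δ k)))
    (r : H →L[ℂ] H')
    (hr : r = (α : ℂ)⁻¹ •
      ∑ i, Γ' i ∘L (adjoint (Δ' i) ∘L rhat ∘L Δ i) ∘L adjoint (Γ i)) :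
    ∀ k, (r ∘L Γ k = Γ' k ∘L (adjoint (Δ' k) ∘L rhat ∘L Δ k)) ∧
      (adjoint (Δ' k) ∘L rhat ∘L Δ k = adjoint (Γ' k) ∘L r ∘L Γ k) ∧
      (r ∘L P k = P' k ∘L r ∘L P k) := by
  have hα₀ : (α : ℂ) ≠ 0 := by exact_mod_cast (by linarith : α ≠ 0)
  have hα₁ : (α : ℂ) - 1 ≠ 0 := by
    rw [sub_ne_zero]
    exact_mod_cast hα.ne'
  have Δ'_left_inv (i) (y : K' i) : adjoint (Δ' i) (Δ' i y) = y := DFunLike.congr_fun (hΔ'₁ i) y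
  have intertwine (i) (y : E) :
      adjoint (Δ' i) (rhat y) = adjoint (Δ' i) (rhat (Δ i (adjoint (Δ i) y))) := by
    have h := congrArg (adjoint (Δ' i)) (DFunLike.congr_fun (hrhat i) y)
    simpa only [comp_apply, Δ'_left_inv] using h
  have sum_zero (y : E) :
      ∑ i, Γ' i (adjoint (Δ' i) (rhat (Δ i (adjoint (Δ i) y)))) = 0 := by
    have h := DFunLike.congr_fun hΔ'₂ (rhat y)
    simpa only [sum_apply, comp_apply, zero_apply, intertwine _ y] using h
  have r_comp_Γ (k) : r ∘L Γ k = Γ' k ∘L (adjoint (Δ' k) ∘L rhat ∘L Δ k) := by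
    ext x
    have hΓx : adjoint (Γ k) (Γ k x) = x := DFunLike.congr_fun (hΓ₁ k) x
    have hΔx : adjoint (Δ k) (Δ k x) = x := DFunLike.congr_fun (hΔ₁ k) x
    have off_diag (i) (hi : i ∈ Finset.univ.erase k) :
        Γ' i (adjoint (Δ' i) (rhat (Δ i (adjoint (Γ i) (Γ k x))))) =
          (-((α : ℂ) - 1)) • Γ' i (adjoint (Δ' i) (rhat (Δ i (adjoint (Δ i) (Δ k x))))) := by
      have h : adjoint (Δ i) (Δ k x) = (-((α : ℂ) - 1)⁻¹) • adjoint (Γ i) (Γ k x) :=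
        DFunLike.congr_fun (hΔ₃ i k (Finset.ne_of_mem_erase hi)) x
      rw [h]
      simp only [map_smul, smul_smul, neg_mul_neg, mul_inv_cancel₀ hα₁, one_smul]
    have h := sum_zero (Δ k x)
    rw [← Finset.add_sum_erase _ _ (Finset.mem_univ k), hΔx, add_eq_zero_iff_neg_eq] at h
    simp only [hr, comp_apply, smul_apply, sum_apply]
    rw [← Finset.add_sum_erase _ _ (Finset.mem_univ k), hΓx, Finset.sum_congr rfl off_diag,
      ← Finset.smul_sum, ← h, inv_smul_eq_iff₀ hα₀]
    module
  have compression (k) : adjoint (Δ' k) ∘L rhat ∘L Δ k = adjoint (Γ' k) ∘L r ∘L Γ k := by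
    rw [r_comp_Γ k, ← comp_assoc (adjoint (Γ' k)), hΓ'₁ k]
    rfl
  refine fun k => ⟨r_comp_Γ k, compression k, ?_⟩
  calc r ∘L P k = (r ∘L Γ k) ∘L adjoint (Γ k) := by rw [← hΓ₂ k, comp_assoc]
    _ = P' k ∘L r ∘L P k := by
      rw [r_comp_Γ k, compression k, ← hΓ₂ k, ← hΓ'₂ k]
      rfl
end

section
/- Let H and Ĥ be complex Hilbert spaces, α > 1, and P_1,…,P_n orthogonal projections on H with ΣP_i = αI_H. Let Γ_i be the inclusion isometries of H_i = range P_i and Δ_i : H_i → Ĥ operators satisfying the Coxeter relations (Δ_i*Δ_i = I, Σ_iΓ_iΔ_i* = 0, Δ_i*Δ_j = −(1/(α−1))Γ_i*Γ_j for i ≠ j) and Σ_i Δ_iΔ_i* = (α/(α−1)) I_Ĥ; put Q_i = Δ_iΔ_i*. If the system (H; range P_1,…,range P_n) is transitive (every bounded operator on H leaving each range P_i invariant is scalar), then the system (Ĥ; range Q_1,…,range Q_n) is transitive. -/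
open ContinuousLinearMap in
/-- An operator leaving the range of `V V*` invariant, for an isometry `V`, restricts to the
operator `V* R V` on the domain of `V`. -/
theorem apply_isometry_of_image_range_subset {F E : Type*}
    [NormedAddCommGroup F] [InnerProductSpace ℂ F] [CompleteSpace F]
    [NormedAddCommGroup E] [InnerProductSpace ℂ E] [CompleteSpace E]
    {V : F →L[ℂ] E} (hV : adjoint V ∘L V = 1) {R : E →L[ℂ] E}
    (hR : ⇑R '' Set.range ⇑(V ∘L adjoint V) ⊆ Set.range ⇑(V ∘L adjoint V)) (v : F) :
    V (adjoint V (R (V v))) = R (V v) := by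
  have hV' (w : F) : adjoint V (V w) = w := congr($hV w)
  obtain ⟨u, hu⟩ := hR ⟨V v, ⟨V v, by simp [hV']⟩, rfl⟩
  rw [← hu]
  simp [hV']

open ContinuousLinearMap in
/-- The Gram identity `Γ*Γ + (α - 1) Δ*Δ = α` for the row operators `Γ = (Γ_j)` and
`Δ = (Δ_j)`, read off in the `i`-th component. -/
theorem sum_adjoint_apply_add_eq_smul {ι H E : Type*} [Fintype ι]
    [NormedAddCommGroup H] [InnerProductSpace ℂ H] [CompleteSpace H]
    [NormedAddCommGroup E] [InnerProductSpace ℂ E] [CompleteSpace E]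
    {K : ι → Type*}
    [∀ i, NormedAddCommGroup (K i)] [∀ i, InnerProductSpace ℂ (K i)] [∀ i, CompleteSpace (K i)]
    {a : ℂ} (ha : a - 1 ≠ 0) {Γ : ∀ i, K i →L[ℂ] H} {Δ : ∀ i, K i →L[ℂ] E}
    (hΓ : ∀ i, adjoint (Γ i) ∘L Γ i = 1) (hΔ : ∀ i, adjoint (Δ i) ∘L Δ i = 1)
    (hΓΔ : ∀ i j, i ≠ j → adjoint (Δ i) ∘L Δ j = (-(a - 1)⁻¹) • (adjoint (Γ i) ∘L Γ j))
    (w : ∀ i, K i) (i : ι) :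
    adjoint (Γ i) (∑ j, Γ j (w j)) + (a - 1) • adjoint (Δ i) (∑ j, Δ j (w j)) = a • w i := by
  rw [map_sum, map_sum, Finset.smul_sum, ← Finset.sum_add_distrib, Finset.sum_eq_single i]
  · have h₁ : adjoint (Γ i) (Γ i (w i)) = w i := congr($(hΓ i) (w i))
    have h₂ : adjoint (Δ i) (Δ i (w i)) = w i := congr($(hΔ i) (w i))
    rw [h₁, h₂]
    module
  · intro j _ hj
    have h : adjoint (Δ i) (Δ j (w j)) = (-(a - 1)⁻¹) • adjoint (Γ i) (Γ j (w j)) :=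
      congr($(hΓΔ i j hj.symm) (w j))
    rw [h, smul_smul, mul_neg, mul_inv_cancel₀ ha]
    module
  · simp

open ContinuousLinearMap in
/-- The Coxeter functor preserves transitivity: if the system of the
ranges of the `P_i` is transitive, then so is the system of the ranges of the
`Q_i = Δ_iΔ_i*`. -/
theorem stmt_13
    {n : ℕ} {H E : Type*}
    [NormedAddCommGroup H] [InnerProductSpace ℂ H] [CompleteSpace H]
    [NormedAddCommGroup E] [InnerProductSpace ℂ E] [CompleteSpace E]
    {K : Fin n → Type*}
    [∀ i, NormedAddCommGroup (K i)] [∀ i, InnerProductSpace ℂ (K i)] [∀ i, CompleteSpace (K i)]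
    (α : ℝ) (hα : 1 < α)
    (P : Fin n → H →L[ℂ] H)
    (hPsa : ∀ i, IsSelfAdjoint (P i)) (hPidem : ∀ i, P i ∘L P i = P i)
    (hPsum : ∑ i, P i = (α : ℂ) • (1 : H →L[ℂ] H))
    (Γ : ∀ i, K i →L[ℂ] H)
    (hΓ₁ : ∀ i, adjoint (Γ i) ∘L Γ i = 1) (hΓ₂ : ∀ i, Γ i ∘L adjoint (Γ i) = P i)
    (Δ : ∀ i, K i →L[ℂ] E)
    (hΔ₁ : ∀ i, adjoint (Δ i) ∘L Δ i = 1)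
    (hΔ₂ : ∑ i, Γ i ∘L adjoint (Δ i) = 0)
    (hΔ₃ : ∀ i j, i ≠ j →
      adjoint (Δ i) ∘L Δ j = (-((α : ℂ) - 1)⁻¹) • (adjoint (Γ i) ∘L Γ j))
    (hQsum : ∑ i, Δ i ∘L adjoint (Δ i) =
      ((α : ℂ) / ((α : ℂ) - 1)) • (1 : E →L[ℂ] E))
    (htrans : ∀ R : H →L[ℂ] H,
      (∀ i, ⇑R '' Set.range ⇑(P i) ⊆ Set.range ⇑(P i)) →
      ∃ c : ℂ, R = c • (1 : H →L[ℂ] H)) :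
    ∀ R : E →L[ℂ] E,
      (∀ i, ⇑R '' Set.range ⇑(Δ i ∘L adjoint (Δ i)) ⊆ Set.range ⇑(Δ i ∘L adjoint (Δ i))) →
      ∃ c : ℂ, R = c • (1 : E →L[ℂ] E) := by
  intro R hR
  have hα₀ : (α : ℂ) ≠ 0 := by exact_mod_cast (by linarith : α ≠ 0)
  have hα₁ : (α : ℂ) - 1 ≠ 0 := by exact_mod_cast (by linarith : α - 1 ≠ 0)
  have hΓ (i) (w : K i) : adjoint (Γ i) (Γ i w) = w := congr($(hΓ₁ i) w)
  have hRΔ (i) (v : K i) : Δ i (adjoint (Δ i) (R (Δ i v))) = R (Δ i v) :=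
    apply_isometry_of_image_range_subset (hΔ₁ i) (hR i) v
  have hΔΓ (x : H) : ∑ i, Δ i (adjoint (Γ i) x) = 0 := by
    have h := congr(adjoint $hΔ₂ x)
    simpa [map_sum, adjoint_comp] using h
  let D (i) : K i →L[ℂ] K i := adjoint (Δ i) ∘L R ∘L Δ i
  let S : H →L[ℂ] H := (α : ℂ)⁻¹ • ∑ i, Γ i ∘L D i ∘L adjoint (Γ i)
  have hS (i) : adjoint (Γ i) ∘L S = D i ∘L adjoint (Γ i) := by
    ext x
    have h := sum_adjoint_apply_add_eq_smul hα₁ hΓ₁ hΔ₁ hΔ₃ (fun j ↦ D j (adjoint (Γ j) x)) i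
    have h₀ : ∑ j, Δ j (D j (adjoint (Γ j) x)) = 0 := by
      simp only [D, comp_apply, hRΔ]
      rw [← map_sum, hΔΓ, map_zero]
    rw [h₀, map_zero, smul_zero, add_zero] at h
    simp only [S, comp_apply, smul_apply, sum_apply, map_smul, h, smul_smul,
      inv_mul_cancel₀ hα₀, one_smul]
  have hS' (i) (v : K i) : adjoint S (Γ i v) = Γ i (adjoint (D i) v) := by
    have h := congr(adjoint $(hS i) v)
    simpa [adjoint_comp] using h
  obtain ⟨c, hc⟩ := htrans (adjoint S) (by
    rintro i _ ⟨_, ⟨x, rfl⟩, rfl⟩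
    refine ⟨Γ i (adjoint (D i) (adjoint (Γ i) x)), ?_⟩
    simp only [← hΓ₂, comp_apply, hΓ, hS'])
  have hSc (x : H) : S x = star c • x := by
    have h : S = adjoint (c • (1 : H →L[ℂ] H)) := by rw [← hc, adjoint_adjoint]
    rw [h]
    refine ext_inner_right ℂ fun y ↦ ?_
    simp [adjoint_inner_left, inner_smul_left, inner_smul_right]
  have hD (i) (v : K i) : D i v = star c • v := by
    have h : adjoint (Γ i) (S (Γ i v)) = D i (adjoint (Γ i) (Γ i v)) := congr($(hS i) (Γ i v))
    rwa [hSc, map_smul, hΓ, eq_comm] at h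
  have hRc (i) (v : K i) : R (Δ i v) = star c • Δ i v := by
    rw [← hRΔ, ← map_smul, ← hD]
    rfl
  refine ⟨star c, ?_⟩
  ext y
  have hy : ∑ i, Δ i (adjoint (Δ i) y) = ((α : ℂ) / (α - 1)) • y := by
    simpa using congr($hQsum y)
  have h : R (((α : ℂ) / (α - 1)) • y) = star c • ((α : ℂ) / (α - 1)) • y := by
    rw [← hy, map_sum, Finset.smul_sum]
    exact Finset.sum_congr rfl fun i _ ↦ hRc i _
  rw [map_smul, smul_comm] at h
  exact smul_right_injective E (div_ne_zero hα₀ hα₁) h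
end

section
/- Under the Coxeter-functor setup with two projection families (P_i on H and P̃_i on H̃, both summing to αI with α > 1, inclusion isometries Γ_i, Γ̃_i, operators Δ_i, Δ̃_i satisfying the Coxeter relations and Σ_iΔ_iΔ_i* = (α/(α−1))I_Ĥ, Σ_iΔ̃_iΔ̃_i* = (α/(α−1))I_{H̃̂}, Q_i = Δ_iΔ_i*, Q̃_i = Δ̃_iΔ̃_i*), suppose T : H → H̃ is a bounded invertible operator with T(range P_i) = range P̃_i for all i. Set T_i = Γ̃_i*TΓ_i, T̂ = ((α−1)/α)Σ_iΔ̃_iT_iΔ_i*, and define (T⁻¹)^ analogously from T⁻¹. Then T̂ is invertible with inverse (T⁻¹)^, and T̂*(range Q̃_i) = range Q_i for all i = 1,…,n; in particular the systems (Ĥ; range Q_1,…,range Q_n) and (H̃̂; range Q̃_1,…,range Q̃_n) are isomorphic. -/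
open ContinuousLinearMap in
/-- If `T` maps `ran V` into the range of the projection `W W*`, then `W (W* T V) = T V`. -/
theorem proj_apply_of_image_subset {H H' K K' : Type*}
    [NormedAddCommGroup H] [InnerProductSpace ℂ H] [CompleteSpace H]
    [NormedAddCommGroup H'] [InnerProductSpace ℂ H'] [CompleteSpace H']
    [NormedAddCommGroup K] [InnerProductSpace ℂ K] [CompleteSpace K]
    [NormedAddCommGroup K'] [InnerProductSpace ℂ K'] [CompleteSpace K']
    {V : K →L[ℂ] H} {W : K' →L[ℂ] H'} {T : H →L[ℂ] H'}
    (hV : adjoint V ∘L V = 1) (hW : adjoint W ∘L W = 1)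
    (hT : ⇑T '' Set.range ⇑(V ∘L adjoint V) ⊆ Set.range ⇑(W ∘L adjoint W)) (k : K) :
    W (adjoint W (T (V k))) = T (V k) := by
  have hV' : adjoint V (V k) = k := congr($hV k)
  obtain ⟨y, hy⟩ := hT ⟨V k, ⟨V k, by simp [hV']⟩, rfl⟩
  have hW' : ∀ z, adjoint W (W z) = z := fun z ↦ congr($hW z)
  rw [← hy]
  simp [hW']

open ContinuousLinearMap in
/-- The Coxeter transform `C ↦ ((α - 1) / α) ∑ Δ'_i C_i Δ_i*` of an operator `T` with
`T (ran Γ_i) ⊆ ran Γ'_i` intertwines the adjoints of `Δ` and `Δ'` with the compressions of `T`. -/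
theorem adjoint_apply_coxeterTransform
    {ι : Type*} [Fintype ι] {H H' E E' : Type*}
    [NormedAddCommGroup H] [InnerProductSpace ℂ H] [CompleteSpace H]
    [NormedAddCommGroup H'] [InnerProductSpace ℂ H'] [CompleteSpace H']
    [NormedAddCommGroup E] [InnerProductSpace ℂ E] [CompleteSpace E]
    [NormedAddCommGroup E'] [InnerProductSpace ℂ E'] [CompleteSpace E']
    {K K' : ι → Type*}
    [∀ i, NormedAddCommGroup (K i)] [∀ i, InnerProductSpace ℂ (K i)] [∀ i, CompleteSpace (K i)]
    [∀ i, NormedAddCommGroup (K' i)] [∀ i, InnerProductSpace ℂ (K' i)] [∀ i, CompleteSpace (K' i)]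
    {α : ℝ} (hα : 1 < α)
    {Γ : ∀ i, K i →L[ℂ] H} {Γ' : ∀ i, K' i →L[ℂ] H'}
    {Δ : ∀ i, K i →L[ℂ] E} (hΔ₂ : ∑ i, Γ i ∘L adjoint (Δ i) = 0)
    {Δ' : ∀ i, K' i →L[ℂ] E'} (hΔ'₁ : ∀ i, adjoint (Δ' i) ∘L Δ' i = 1)
    (hΔ'₃ : ∀ i j, i ≠ j →
      adjoint (Δ' i) ∘L Δ' j = (-((α : ℂ) - 1)⁻¹) • (adjoint (Γ' i) ∘L Γ' j))
    {T : H →L[ℂ] H'} (hT : ∀ i k, Γ' i (adjoint (Γ' i) (T (Γ i k))) = T (Γ i k))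
    (j : ι) (x : E) :
    adjoint (Δ' j) (((((α : ℂ) - 1) / (α : ℂ)) •
      ∑ i, Δ' i ∘L (adjoint (Γ' i) ∘L T ∘L Γ i) ∘L adjoint (Δ i)) x) =
      adjoint (Γ' j) (T (Γ j (adjoint (Δ j) x))) := by
  classical
  have h0 : (α : ℂ) ≠ 0 := by exact_mod_cast (by linarith : α ≠ 0)
  have h1 : (α : ℂ) - 1 ≠ 0 := by
    rw [sub_ne_zero]; exact_mod_cast hα.ne'
  have hterm : ∀ i, adjoint (Δ' j) (Δ' i (adjoint (Γ' i) (T (Γ i (adjoint (Δ i) x))))) =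
      (-((α : ℂ) - 1)⁻¹) • adjoint (Γ' j) (T (Γ i (adjoint (Δ i) x))) +
      if i = j then ((α : ℂ) / ((α : ℂ) - 1)) • adjoint (Γ' j) (T (Γ j (adjoint (Δ j) x)))
      else 0 := by
    intro i
    by_cases h : i = j
    · subst h
      have h2 : ∀ z, adjoint (Δ' i) (Δ' i z) = z := fun z ↦ congr($(hΔ'₁ i) z)
      rw [if_pos rfl, h2, ← add_smul]
      have h3 : -((α : ℂ) - 1)⁻¹ + (α : ℂ) / ((α : ℂ) - 1) = 1 := by field_simp; ring
      rw [h3, one_smul]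
    · have h2 : ∀ z, adjoint (Δ' j) (Δ' i z) =
          (-((α : ℂ) - 1)⁻¹) • adjoint (Γ' j) (Γ' i z) :=
        fun z ↦ congr($(hΔ'₃ j i (Ne.symm h)) z)
      rw [if_neg h, h2, hT, add_zero]
  have hsum : ∑ i, Γ i (adjoint (Δ i) x) = 0 := by
    simpa [sum_apply] using congr($hΔ₂ x)
  simp only [smul_apply, sum_apply, comp_apply, map_smul, map_sum, hterm, Finset.sum_add_distrib,
    ← Finset.smul_sum, Finset.sum_ite_eq', Finset.mem_univ, if_true]
  rw [← map_sum, ← map_sum, hsum, map_zero, map_zero, smul_zero, zero_add, smul_smul]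
  have h3 : ((α : ℂ) - 1) / α * (α / (α - 1)) = 1 := by field_simp
  rw [h3, one_smul]

open ContinuousLinearMap in
/-- If `∑ Δ_i Δ_i*` is a nonzero multiple of the identity, an operator `A` is the identity as soon
as `Δ_i* A = Δ_i*` for all `i`. -/
theorem eq_one_of_adjoint_apply_eq {ι : Type*} [Fintype ι] {E : Type*}
    [NormedAddCommGroup E] [InnerProductSpace ℂ E] [CompleteSpace E]
    {K : ι → Type*} [∀ i, NormedAddCommGroup (K i)] [∀ i, InnerProductSpace ℂ (K i)]
    [∀ i, CompleteSpace (K i)] {Δ : ∀ i, K i →L[ℂ] E} {c : ℂ} (hc : c ≠ 0)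
    (hsum : ∑ i, Δ i ∘L adjoint (Δ i) = c • (1 : E →L[ℂ] E)) {A : E →L[ℂ] E}
    (hA : ∀ i x, adjoint (Δ i) (A x) = adjoint (Δ i) x) : A = 1 := by
  ext x
  have hsum' : ∀ z, ∑ i, Δ i (adjoint (Δ i) z) = c • z := fun z ↦ by
    simpa [sum_apply] using congr($hsum z)
  have h := hsum' (A x)
  simp only [hA, hsum'] at h
  exact (smul_right_injective E hc h).symm

open ContinuousLinearMap in
/-- The Coxeter functor maps isomorphic systems to isomorphic systems:
if `T` is bounded invertible with `T(ran P_i) = ran P̃_i`, then `That` is invertible with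
inverse `(T⁻¹)^`, and `That*(ran Q̃_i) = ran Q_i` for all `i`. -/
theorem stmt_14
    {n : ℕ} {H H' E E' : Type*}
    [NormedAddCommGroup H] [InnerProductSpace ℂ H] [CompleteSpace H]
    [NormedAddCommGroup H'] [InnerProductSpace ℂ H'] [CompleteSpace H']
    [NormedAddCommGroup E] [InnerProductSpace ℂ E] [CompleteSpace E]
    [NormedAddCommGroup E'] [InnerProductSpace ℂ E'] [CompleteSpace E']
    {K K' : Fin n → Type*}
    [∀ i, NormedAddCommGroup (K i)] [∀ i, InnerProductSpace ℂ (K i)] [∀ i, CompleteSpace (K i)]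
    [∀ i, NormedAddCommGroup (K' i)] [∀ i, InnerProductSpace ℂ (K' i)] [∀ i, CompleteSpace (K' i)]
    (α : ℝ) (hα : 1 < α)
    (P : Fin n → H →L[ℂ] H)
    (hPsa : ∀ i, IsSelfAdjoint (P i)) (hPidem : ∀ i, P i ∘L P i = P i)
    (hPsum : ∑ i, P i = (α : ℂ) • (1 : H →L[ℂ] H))
    (P' : Fin n → H' →L[ℂ] H')
    (hP'sa : ∀ i, IsSelfAdjoint (P' i)) (hP'idem : ∀ i, P' i ∘L P' i = P' i)
    (hP'sum : ∑ i, P' i = (α : ℂ) • (1 : H' →L[ℂ] H'))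
    (Γ : ∀ i, K i →L[ℂ] H)
    (hΓ₁ : ∀ i, adjoint (Γ i) ∘L Γ i = 1) (hΓ₂ : ∀ i, Γ i ∘L adjoint (Γ i) = P i)
    (Γ' : ∀ i, K' i →L[ℂ] H')
    (hΓ'₁ : ∀ i, adjoint (Γ' i) ∘L Γ' i = 1) (hΓ'₂ : ∀ i, Γ' i ∘L adjoint (Γ' i) = P' i)
    (Δ : ∀ i, K i →L[ℂ] E)
    (hΔ₁ : ∀ i, adjoint (Δ i) ∘L Δ i = 1)
    (hΔ₂ : ∑ i, Γ i ∘L adjoint (Δ i) = 0)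
    (hΔ₃ : ∀ i j, i ≠ j →
      adjoint (Δ i) ∘L Δ j = (-((α : ℂ) - 1)⁻¹) • (adjoint (Γ i) ∘L Γ j))
    (hQsum : ∑ i, Δ i ∘L adjoint (Δ i) =
      ((α : ℂ) / ((α : ℂ) - 1)) • (1 : E →L[ℂ] E))
    (Δ' : ∀ i, K' i →L[ℂ] E')
    (hΔ'₁ : ∀ i, adjoint (Δ' i) ∘L Δ' i = 1)
    (hΔ'₂ : ∑ i, Γ' i ∘L adjoint (Δ' i) = 0)
    (hΔ'₃ : ∀ i j, i ≠ j →
      adjoint (Δ' i) ∘L Δ' j = (-((α : ℂ) - 1)⁻¹) • (adjoint (Γ' i) ∘L Γ' j))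
    (hQ'sum : ∑ i, Δ' i ∘L adjoint (Δ' i) =
      ((α : ℂ) / ((α : ℂ) - 1)) • (1 : E' →L[ℂ] E'))
    (T : H →L[ℂ] H') (S : H' →L[ℂ] H)
    (hTS : T ∘L S = 1) (hST : S ∘L T = 1)
    (hT : ∀ i, ⇑T '' Set.range ⇑(P i) = Set.range ⇑(P' i))
    (That : E →L[ℂ] E')
    (hThat : That = (((α : ℂ) - 1) / (α : ℂ)) •
      ∑ i, Δ' i ∘L (adjoint (Γ' i) ∘L T ∘L Γ i) ∘L adjoint (Δ i))
    (Shat : E' →L[ℂ] E)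
    (hShat : Shat = (((α : ℂ) - 1) / (α : ℂ)) •
      ∑ i, Δ i ∘L (adjoint (Γ i) ∘L S ∘L Γ' i) ∘L adjoint (Δ' i)) :
    That ∘L Shat = 1 ∧ Shat ∘L That = 1 ∧
    ∀ i, ⇑(adjoint That) '' Set.range ⇑(Δ' i ∘L adjoint (Δ' i)) =
      Set.range ⇑(Δ i ∘L adjoint (Δ i)) := by
  have h0 : (α : ℂ) ≠ 0 := by exact_mod_cast (by linarith : α ≠ 0)
  have h1 : (α : ℂ) - 1 ≠ 0 := by
    rw [sub_ne_zero]; exact_mod_cast hα.ne'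
  have hST' : ∀ z, S (T z) = z := fun z ↦ congr($hST z)
  have hTS' : ∀ z, T (S z) = z := fun z ↦ congr($hTS z)
  have hS : ∀ i, ⇑S '' Set.range ⇑(P' i) ⊆ Set.range ⇑(P i) := by
    intro i
    rw [← hT i, Set.image_image]
    simp [hST']
  have hTΓ : ∀ i k, Γ' i (adjoint (Γ' i) (T (Γ i k))) = T (Γ i k) := fun i ↦
    proj_apply_of_image_subset (hΓ₁ i) (hΓ'₁ i) (by rw [hΓ₂, hΓ'₂]; exact (hT i).subset)
  have hSΓ : ∀ i k, Γ i (adjoint (Γ i) (S (Γ' i k))) = S (Γ' i k) := fun i ↦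
    proj_apply_of_image_subset (hΓ'₁ i) (hΓ₁ i) (by rw [hΓ₂, hΓ'₂]; exact hS i)
  have hΓ : ∀ i z, adjoint (Γ i) (Γ i z) = z := fun i z ↦ congr($(hΓ₁ i) z)
  have hΓ' : ∀ i z, adjoint (Γ' i) (Γ' i z) = z := fun i z ↦ congr($(hΓ'₁ i) z)
  have hΔ : ∀ i z, adjoint (Δ i) (Δ i z) = z := fun i z ↦ congr($(hΔ₁ i) z)
  have hΔ' : ∀ i z, adjoint (Δ' i) (Δ' i z) = z := fun i z ↦ congr($(hΔ'₁ i) z)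
  have hThatΔ : ∀ j x, adjoint (Δ' j) (That x) =
      adjoint (Γ' j) (T (Γ j (adjoint (Δ j) x))) := by
    rw [hThat]
    exact adjoint_apply_coxeterTransform hα hΔ₂ hΔ'₁ hΔ'₃ hTΓ
  have hShatΔ : ∀ j x, adjoint (Δ j) (Shat x) =
      adjoint (Γ j) (S (Γ' j (adjoint (Δ' j) x))) := by
    rw [hShat]
    exact adjoint_apply_coxeterTransform hα hΔ'₂ hΔ₁ hΔ₃ hSΓ
  have hadj : ∀ j z, adjoint That (Δ' j z) =
      Δ j (adjoint (Γ j) (adjoint T (Γ' j z))) := by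
    intro j z
    refine ext_inner_right ℂ fun x ↦ ?_
    simp only [adjoint_inner_left]
    rw [← adjoint_inner_right, hThatΔ]
    simp only [← adjoint_inner_left, adjoint_adjoint]
  refine ⟨eq_one_of_adjoint_apply_eq (div_ne_zero h0 h1) hQ'sum fun i x ↦ ?_,
    eq_one_of_adjoint_apply_eq (div_ne_zero h0 h1) hQsum fun i x ↦ ?_, fun i ↦ ?_⟩
  · rw [comp_apply, hThatΔ, hShatΔ, hSΓ, hTS', hΓ']
  · rw [comp_apply, hShatΔ, hThatΔ, hTΓ, hST', hΓ]
  · apply Set.Subset.antisymm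
    · rintro _ ⟨_, ⟨x, rfl⟩, rfl⟩
      refine ⟨Δ i (adjoint (Γ i) (adjoint T (Γ' i (adjoint (Δ' i) x)))), ?_⟩
      simp only [comp_apply, hΔ, hadj]
    · rintro _ ⟨x, rfl⟩
      have key : ∀ z, adjoint (Γ i) (adjoint T (Γ' i (adjoint (Γ' i) (adjoint S (Γ i z))))) =
          z := by
        intro z
        refine ext_inner_right ℂ fun y ↦ ?_
        simp only [adjoint_inner_left]
        rw [← adjoint_inner_right, adjoint_inner_left, hTΓ, adjoint_inner_left, hST',
          ← adjoint_inner_right, hΓ]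
      refine ⟨Δ' i (adjoint (Γ' i) (adjoint S (Γ i (adjoint (Δ i) x)))),
        ⟨Δ' i (adjoint (Γ' i) (adjoint S (Γ i (adjoint (Δ i) x)))), ?_⟩, ?_⟩
      · simp only [comp_apply, hΔ']
      · rw [hadj, key, comp_apply]
end
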